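/- arXiv:2307.06592 — 6 statements merged into one kernel-verified Lean document; each statement's English description precedes it below -/
import Mathlib

section
/- The subspace $A_0$ of torus-invariant polynomials equals the $k$-subalgebra of $A$ generated by the $n+3$ elements $t_0,\dots,t_n$, $u$, and $v$ (that is, by $x_0y_0,\dots,x_ny_n$, $x_0x_1\cdots x_n$, and $y_0y_1\cdots y_n$). -/
open MvPolynomial

noncomputable section

/-- The variables of `A = k[x₀,…,xₙ,y₀,…,yₙ]`: `Sum.inl i` is `xᵢ`, `Sum.inr i` is `yᵢ`. -/
abbrev Vars (n : ℕ) : Type := Fin (n + 1) ⊕ Fin (n + 1)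

/-- The `l`-th weight of a monomial `∏ xᵢ^{cᵢ} yᵢ^{dᵢ}`, for `l ∈ {1,…,n}` encoded as
`l : Fin n` (representing the index `l+1`): it is `c_{l-1} - c_l - d_{l-1} + d_l`. -/
def wt (n : ℕ) (σ : Vars n →₀ ℕ) (l : Fin n) : ℤ :=
  (σ (Sum.inl l.castSucc) : ℤ) - (σ (Sum.inl l.succ) : ℤ)
    - (σ (Sum.inr l.castSucc) : ℤ) + (σ (Sum.inr l.succ) : ℤ)

/-- The weight space `A_χ`: the set of polynomials all of whose monomials have `l`-th
weight `χ l` for every `l`. -/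
def wtSpace (k : Type) [Field k] (n : ℕ) (χ : Fin n → ℤ) : Set (MvPolynomial (Vars n) k) :=
  {p | ∀ σ ∈ p.support, ∀ l : Fin n, wt n σ l = χ l}

theorem wt_add (n : ℕ) (σ τ : Vars n →₀ ℕ) (l : Fin n) :
    wt n (σ + τ) l = wt n σ l + wt n τ l := by
  simp only [wt, Finsupp.add_apply]
  push_cast
  ring

theorem wtSpace_mul (k : Type) [Field k] (n : ℕ) (p q : MvPolynomial (Vars n) k)
    (hp : p ∈ wtSpace k n 0) (hq : q ∈ wtSpace k n 0) : p * q ∈ wtSpace k n 0 := by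
  classical
  intro σ hσ l
  obtain ⟨a, ha, b, hb, rfl⟩ := Finset.mem_add.1 (support_mul p q hσ)
  have h1 := hp a ha l
  have h2 := hq b hb l
  rw [wt_add, h1, h2]
  simp

theorem wtSpace_monomial (k : Type) [Field k] (n : ℕ) (σ : Vars n →₀ ℕ) (c : k)
    (h : ∀ l, wt n σ l = 0) : monomial σ c ∈ wtSpace k n 0 := by
  classical
  intro τ hτ l
  have := support_monomial_subset hτ
  rw [Finset.mem_singleton] at this
  subst this
  exact h l

theorem monomial_eq_prods (k : Type) [Field k] (n : ℕ) (σ : Vars n →₀ ℕ) :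
    (monomial σ (1 : k)) = (∏ i, X (Sum.inl i) ^ σ (Sum.inl i)) *
      ∏ i, X (Sum.inr i) ^ σ (Sum.inr i) := by
  rw [monomial_eq, Finsupp.prod_fintype _ _ (by simp), Fintype.prod_sum_type]
  simp

theorem prod_X_mem (k : Type) [Field k] (n : ℕ) (f : Fin (n + 1) → Vars n)
    (hf : f = Sum.inl ∨ f = Sum.inr) :
    (∏ i, X (f i) : MvPolynomial (Vars n) k) ∈ wtSpace k n 0 := by
  have : (∏ i, X (f i) : MvPolynomial (Vars n) k) =
      monomial (∑ i, Finsupp.single (f i) 1) 1 := by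
    rw [monomial_sum_one]
    rfl
  rw [this]
  apply wtSpace_monomial
  intro l
  rcases hf with rfl | rfl <;>
  simp [wt, Finsupp.finsetSum_apply, Finsupp.single_apply]

theorem diff_const (n : ℕ) (σ : Vars n →₀ ℕ) (h : ∀ l, wt n σ l = 0) (i : Fin (n + 1)) :
    (σ (Sum.inl i) : ℤ) - σ (Sum.inr i) = σ (Sum.inl 0) - σ (Sum.inr 0) := by
  induction i using Fin.induction with
  | zero => rfl
  | succ l ih =>
    have := h l
    simp only [wt] at this
    linarith

/-- The torus-invariant subspace `A₀` equals the `k`-subalgebra of `A` generated by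
`t₀ = x₀y₀, …, tₙ = xₙyₙ`, `u = x₀⋯xₙ` and `v = y₀⋯yₙ`. -/
theorem stmt0 (k : Type) [Field k] (n : ℕ) (hn : 1 ≤ n) :
    wtSpace k n 0 =
      ↑(Algebra.adjoin k
        ((Set.range fun i : Fin (n + 1) =>
            (X (Sum.inl i) * X (Sum.inr i) : MvPolynomial (Vars n) k)) ∪
          {∏ i, X (Sum.inl i), ∏ i, X (Sum.inr i)})) := by
  classical
  apply Set.Subset.antisymm
  · intro p hp
    rw [SetLike.mem_coe, p.as_sum]
    refine Subalgebra.sum_mem _ fun σ hσ => ?_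
    have hw : ∀ l, wt n σ l = 0 := hp σ hσ
    have hd := diff_const n σ hw
    have hc : monomial σ (coeff σ p) = coeff σ p • monomial σ (1 : k) := by
      simp [smul_monomial]
    rw [hc]
    refine Subalgebra.smul_mem _ ?_ _
    rw [monomial_eq_prods]
    rcases le_total (σ (Sum.inr 0)) (σ (Sum.inl 0)) with h0 | h0
    · obtain ⟨m, hm⟩ := Nat.exists_eq_add_of_le h0
      have e : ∀ i, σ (Sum.inl i) = σ (Sum.inr i) + m := fun i => by
        have := hd i
        omega
      have : (∏ i, X (Sum.inl i) ^ σ (Sum.inl i) : MvPolynomial (Vars n) k) *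
          ∏ i, X (Sum.inr i) ^ σ (Sum.inr i) =
          (∏ i, (X (Sum.inl i) * X (Sum.inr i)) ^ σ (Sum.inr i)) *
            (∏ i, X (Sum.inl i)) ^ m := by
        rw [← Finset.prod_pow, ← Finset.prod_mul_distrib, ← Finset.prod_mul_distrib]
        refine Finset.prod_congr rfl fun i _ => ?_
        rw [e i]
        ring
      rw [this]
      refine Subalgebra.mul_mem _ (Subalgebra.prod_mem _ fun i _ => Subalgebra.pow_mem _ ?_ _)
        (Subalgebra.pow_mem _ ?_ _)
      · exact Algebra.subset_adjoin (Or.inl ⟨i, rfl⟩)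
      · exact Algebra.subset_adjoin (Or.inr (Or.inl rfl))
    · obtain ⟨m, hm⟩ := Nat.exists_eq_add_of_le h0
      have e : ∀ i, σ (Sum.inr i) = σ (Sum.inl i) + m := fun i => by
        have := hd i
        omega
      have : (∏ i, X (Sum.inl i) ^ σ (Sum.inl i) : MvPolynomial (Vars n) k) *
          ∏ i, X (Sum.inr i) ^ σ (Sum.inr i) =
          (∏ i, (X (Sum.inl i) * X (Sum.inr i)) ^ σ (Sum.inl i)) *
            (∏ i, X (Sum.inr i)) ^ m := by
        rw [← Finset.prod_pow, ← Finset.prod_mul_distrib, ← Finset.prod_mul_distrib]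
        refine Finset.prod_congr rfl fun i _ => ?_
        rw [e i]
        ring
      rw [this]
      refine Subalgebra.mul_mem _ (Subalgebra.prod_mem _ fun i _ => Subalgebra.pow_mem _ ?_ _)
        (Subalgebra.pow_mem _ ?_ _)
      · exact Algebra.subset_adjoin (Or.inl ⟨i, rfl⟩)
      · exact Algebra.subset_adjoin (Or.inr (Or.inr rfl))
  · intro p hp
    refine Algebra.adjoin_induction (p := fun p _ => p ∈ wtSpace k n 0) ?_ ?_ ?_ ?_ hp
    · rintro x (⟨i, rfl⟩ | rfl | rfl)
      · have : (X (Sum.inl i) * X (Sum.inr i) : MvPolynomial (Vars n) k) =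
            monomial (Finsupp.single (Sum.inl i) 1 + Finsupp.single (Sum.inr i) 1) 1 := by
          simp [X, monomial_mul]
        simp only [this]
        apply wtSpace_monomial
        intro l
        simp [wt, Finsupp.single_apply]
      · exact prod_X_mem k n _ (Or.inl rfl)
      · exact prod_X_mem k n _ (Or.inr rfl)
    · intro r
      exact wtSpace_monomial k n 0 r (by simp [wt])
    · intro x y _ _ hx hy σ hσ
      rcases Finset.mem_union.1 (support_add hσ) with h | h
      · exact hx σ h
      · exact hy σ h
    · intro x y _ _ hx hy
      exact wtSpace_mul k n x y hx hy
end
end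

section
/- The $k$-algebra homomorphism $\phi \colon k[T_0,\dots,T_n,U,V] \to A$ determined by $T_i \mapsto x_iy_i$, $U \mapsto x_0x_1\cdots x_n$, $V \mapsto y_0y_1\cdots y_n$ has image $A_0$ and kernel equal to the principal ideal generated by $UV - T_0T_1\cdots T_n$. Consequently $\phi$ induces a $k$-algebra isomorphism $k[T_0,\dots,T_n,U,V]/(UV - T_0T_1\cdots T_n) \cong A_0$. -/
open MvPolynomial

noncomputable section

/-- The polynomial ring `k[T₀,…,Tₙ,U,V]`: `Sum.inl i` is `Tᵢ`, `Sum.inr true` is `U`,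
`Sum.inr false` is `V`. -/
abbrev TUV (k : Type) [Field k] (n : ℕ) : Type := MvPolynomial (Fin (n + 1) ⊕ Bool) k

/-- The `k`-algebra map `φ : k[T₀,…,Tₙ,U,V] → A`, `Tᵢ ↦ xᵢyᵢ`, `U ↦ x₀⋯xₙ`, `V ↦ y₀⋯yₙ`. -/
def tuvMap (k : Type) [Field k] (n : ℕ) : TUV k n →ₐ[k] MvPolynomial (Vars n) k :=
  aeval (Sum.elim (fun i => X (Sum.inl i) * X (Sum.inr i))
    (fun b => if b then ∏ i, X (Sum.inl i) else ∏ i, X (Sum.inr i)))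

/-- The element `UV - T₀T₁⋯Tₙ` of `k[T₀,…,Tₙ,U,V]`. -/
def relElt (k : Type) [Field k] (n : ℕ) : TUV k n :=
  X (Sum.inr true) * X (Sum.inr false) - ∏ i : Fin (n + 1), X (Sum.inl i)

/-- Exponent of the image of a monomial. -/
def expo (n : ℕ) (τ : Fin (n + 1) ⊕ Bool →₀ ℕ) : Vars n →₀ ℕ :=
  Finsupp.equivFunOnFinite.symm (Sum.elim (fun i => τ (Sum.inl i) + τ (Sum.inr true))
    (fun i => τ (Sum.inl i) + τ (Sum.inr false)))

/-- Exponent of the canonical preimage. -/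
def sec (n : ℕ) (σ : Vars n →₀ ℕ) : Fin (n + 1) ⊕ Bool →₀ ℕ :=
  Finsupp.equivFunOnFinite.symm (Sum.elim (fun i => min (σ (Sum.inl i)) (σ (Sum.inr i)))
    (fun b => if b then σ (Sum.inl 0) - σ (Sum.inr 0) else σ (Sum.inr 0) - σ (Sum.inl 0)))

/-- The linear section. -/
def secMap (k : Type) [Field k] (n : ℕ) : MvPolynomial (Vars n) k →ₗ[k] TUV k n :=
  (basisMonomials (Vars n) k).constr k (fun σ => monomial (sec n σ) 1)

theorem secMap_monomial (k : Type) [Field k] (n : ℕ) (σ : Vars n →₀ ℕ) :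
    secMap k n (monomial σ 1) = monomial (sec n σ) 1 := by
  have := (basisMonomials (Vars n) k).constr_basis k
    (fun σ => (monomial (sec n σ) 1 : TUV k n)) σ
  simpa [secMap] using this

theorem mono_eq (k : Type) [Field k] {ι : Type} [Fintype ι] (τ : ι →₀ ℕ) :
    (monomial τ 1 : MvPolynomial ι k) = ∏ i, X i ^ τ i := by
  rw [monomial_eq, C_1, one_mul, Finsupp.prod_fintype]
  simp

theorem tuvMap_monomial (k : Type) [Field k] (n : ℕ) (τ : Fin (n + 1) ⊕ Bool →₀ ℕ) :
    tuvMap k n (monomial τ 1) = monomial (expo n τ) 1 := by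
  rw [mono_eq, mono_eq, map_prod]
  simp only [Fintype.prod_sum_type, map_pow, tuvMap, aeval_X, Sum.elim_inl, Sum.elim_inr,
    Fintype.prod_bool, expo, Finsupp.equivFunOnFinite_symm_apply_apply, if_true, pow_add,
    Finset.prod_mul_distrib, mul_pow, Finset.prod_pow, Bool.false_eq_true, if_false]
  ring

theorem wt_expo (n : ℕ) (τ : Fin (n + 1) ⊕ Bool →₀ ℕ) (l : Fin n) : wt n (expo n τ) l = 0 := by
  simp [wt, expo]
  ring

theorem expo_sec (n : ℕ) (σ : Vars n →₀ ℕ) (h : ∀ l, wt n σ l = 0) :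
    expo n (sec n σ) = σ := by
  have key : ∀ i : Fin (n + 1), (σ (Sum.inl i) : ℤ) - σ (Sum.inr i)
      = σ (Sum.inl 0) - σ (Sum.inr 0) := by
    intro i
    induction i using Fin.induction with
    | zero => rfl
    | succ i ih =>
      have := h i
      simp only [wt] at this
      omega
  ext i
  rcases i with i | i <;> have := key i <;> simp [expo, sec] <;> omega

theorem sec_mem (k : Type) [Field k] (n : ℕ) (τ : Fin (n + 1) ⊕ Bool →₀ ℕ) :
    (monomial τ 1 - monomial (sec n (expo n τ)) 1 : TUV k n) ∈ Ideal.span {relElt k n} := by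
  rw [← Ideal.Quotient.mk_eq_mk_iff_sub_mem, mono_eq, mono_eq]
  have hrel : Ideal.Quotient.mk (Ideal.span {relElt k n}) (X (Sum.inr true)) *
      Ideal.Quotient.mk (Ideal.span {relElt k n}) (X (Sum.inr false)) =
      ∏ i : Fin (n + 1), Ideal.Quotient.mk (Ideal.span {relElt k n}) (X (Sum.inl i)) := by
    rw [← map_mul, ← map_prod, Ideal.Quotient.mk_eq_mk_iff_sub_mem]
    exact Ideal.subset_span rfl
  simp only [Fintype.prod_sum_type, map_pow, map_mul, map_prod, Fintype.prod_bool, expo, sec,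
    Finsupp.equivFunOnFinite_symm_apply_apply, Sum.elim_inl, Sum.elim_inr, if_true,
    Bool.false_eq_true, if_false, min_add_add_left, pow_add, Finset.prod_mul_distrib,
    Finset.prod_pow, ← hrel, Nat.add_sub_add_left]
  generalize τ (Sum.inr true) = a
  generalize τ (Sum.inr false) = b
  rcases le_total a b with hab | hab
  · obtain ⟨c, rfl⟩ := Nat.exists_eq_add_of_le hab
    simp [pow_add]
    ring
  · obtain ⟨c, rfl⟩ := Nat.exists_eq_add_of_le hab
    simp [pow_add]
    ring

theorem monomial_one_smul (k : Type) [Field k] {ι : Type} (τ : ι →₀ ℕ) (a : k) :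
    (monomial τ a : MvPolynomial ι k) = a • monomial τ 1 := by
  rw [smul_monomial, smul_eq_mul, mul_one]

theorem sub_sec_mem (k : Type) [Field k] (n : ℕ) (p : TUV k n) :
    p - secMap k n (tuvMap k n p) ∈ Ideal.span {relElt k n} := by
  induction p using MvPolynomial.induction_on' with
  | monomial τ a =>
    rw [monomial_one_smul, map_smul, map_smul, tuvMap_monomial, secMap_monomial, ← smul_sub]
    exact Submodule.smul_of_tower_mem _ a (sec_mem k n τ)
  | add p q hp hq =>
    rw [map_add, map_add, add_sub_add_comm]
    exact add_mem hp hq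

/-- The map `φ` has image `A₀` and kernel the principal ideal `(UV - T₀⋯Tₙ)`; consequently
it induces a `k`-algebra isomorphism `k[T,U,V]/(UV - T₀⋯Tₙ) ≅ A₀` (the image of `φ`). -/
theorem stmt1 (k : Type) [Field k] (n : ℕ) (hn : 1 ≤ n) :
    (∀ p, p ∈ (tuvMap k n).range ↔ p ∈ wtSpace k n 0) ∧
    RingHom.ker (tuvMap k n).toRingHom = Ideal.span {relElt k n} ∧
    Nonempty ((TUV k n ⧸ Ideal.span {relElt k n}) ≃ₐ[k] (tuvMap k n).range) := by
  have hker : RingHom.ker (tuvMap k n).toRingHom = Ideal.span {relElt k n} := by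
    apply le_antisymm
    · intro p hp
      have h0 : tuvMap k n p = 0 := hp
      have := sub_sec_mem k n p
      rwa [h0, map_zero, sub_zero] at this
    · rw [Ideal.span_singleton_le_iff_mem]
      change tuvMap k n (relElt k n) = 0
      simp [tuvMap, relElt, Finset.prod_mul_distrib]
  refine ⟨fun p => ⟨?_, fun hp => ?_⟩, hker, ?_⟩
  · rintro ⟨q, rfl⟩ σ hσ l
    change σ ∈ (tuvMap k n q).support at hσ
    rw [q.as_sum, map_sum] at hσ
    classical
    obtain ⟨τ, -, hτ⟩ := Finset.mem_biUnion.1 (support_sum hσ)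
    change σ ∈ (tuvMap k n (monomial τ _)).support at hτ
    rw [monomial_one_smul, map_smul, tuvMap_monomial] at hτ
    have := support_monomial_subset (support_smul hτ)
    rw [Finset.mem_singleton.1 this]
    exact wt_expo n τ l
  · rw [p.as_sum]
    refine sum_mem fun σ hσ => ?_
    refine ⟨monomial (sec n σ) (coeff σ p), ?_⟩
    change tuvMap k n _ = _
    rw [monomial_one_smul, map_smul, tuvMap_monomial, expo_sec n σ (hp σ hσ),
      ← monomial_one_smul]
  · exact ⟨(Ideal.quotientEquivAlgOfEq k hker.symm).trans
      (Ideal.quotientKerEquivRange (tuvMap k n))⟩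
end
end

section
/- Let $k$ be a field, $n \ge 2$, and let $(x_0,\dots,x_n,y_0,\dots,y_n) \in k^{2(n+1)}$ be a point for which there is NO pair of indices $0 \le j < l \le n$ with $x_j = 0$ and $y_l = 0$ (i.e. the point lies outside the GIT-unstable locus). Define scalars $\sigma_j = x_0x_1\cdots x_{j-1}$ for $1 \le j \le n-1$ and $\tau_j = y_jy_{j+1}\cdots y_n$ for $2 \le j \le n$. Then the $n-1$ vectors $s_1,\dots,s_{n-1} \in k^n$, where $s_i$ has the entry $\sigma_i$ in coordinate $i$, the entry $\tau_{i+1}$ in coordinate $i+1$, and $0$ in all other coordinates, are linearly independent over $k$. -/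
noncomputable section

/-- Pointwise linear independence of the sections `s₁,…,s_{n-1}` of `⊕ᵢ Mᵢ` at any point
`(x₀,…,xₙ,y₀,…,yₙ)` outside the GIT-unstable locus `⋃_{j<l} {xⱼ = y_l = 0}`.

Encodings: `i : Fin (n-1)` represents the paper's index `i+1 ∈ {1,…,n-1}`, and
`j : Fin n` represents the coordinate `j+1 ∈ {1,…,n}` of `kⁿ`.  The vector `s_{i+1}` has
`σ_{i+1} = x₀⋯xᵢ` in coordinate `i+1` (index `i`), `τ_{i+2} = y_{i+2}⋯yₙ` in coordinate
`i+2` (index `i+1`), and `0` elsewhere. -/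
theorem stmt5 (k : Type) [Field k] (n : ℕ) (hn : 2 ≤ n)
    (x y : Fin (n + 1) → k)
    (hstable : ¬ ∃ j l : Fin (n + 1), j < l ∧ x j = 0 ∧ y l = 0) :
    LinearIndependent k
      (fun i : Fin (n - 1) => fun j : Fin n =>
        if (j : ℕ) = (i : ℕ) then
          ∏ m ∈ Finset.univ.filter (fun m : Fin (n + 1) => (m : ℕ) < (i : ℕ) + 1), x m
        else if (j : ℕ) = (i : ℕ) + 1 then
          ∏ m ∈ Finset.univ.filter (fun m : Fin (n + 1) => (i : ℕ) + 2 ≤ (m : ℕ)), y m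
        else 0) := by
  rw [Fintype.linearIndependent_iff]
  intro g hg
  have hA : ∀ N : ℕ, ∀ i : Fin (n - 1), (i : ℕ) = N →
      (∀ m : Fin (n + 1), (m : ℕ) < (i : ℕ) + 1 → x m ≠ 0) → g i = 0 := by
    intro N
    induction N with
    | zero =>
      intro i hi hx
      have h := congrFun hg ⟨i, by omega⟩
      simp only [Finset.sum_apply, Pi.smul_apply, smul_eq_mul, Pi.zero_apply] at h
      rw [Finset.sum_eq_single i] at h
      · rw [if_pos rfl] at h
        refine (mul_eq_zero.mp h).resolve_right (Finset.prod_ne_zero_iff.mpr ?_)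
        intro m hm
        exact hx m (Finset.mem_filter.mp hm).2
      · intro b _ hb
        have hb' : (b : ℕ) ≠ i := fun e => hb (Fin.ext e)
        rw [if_neg (by omega), if_neg (by omega), mul_zero]
      · simp
    | succ N ih =>
      intro i hi hx
      have h := congrFun hg ⟨i, by omega⟩
      simp only [Finset.sum_apply, Pi.smul_apply, smul_eq_mul, Pi.zero_apply] at h
      rw [Finset.sum_eq_single i] at h
      · rw [if_pos rfl] at h
        refine (mul_eq_zero.mp h).resolve_right (Finset.prod_ne_zero_iff.mpr ?_)
        intro m hm
        exact hx m (Finset.mem_filter.mp hm).2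
      · intro b _ hb
        have hb' : (b : ℕ) ≠ i := fun e => hb (Fin.ext e)
        by_cases hbi : (i : ℕ) = b + 1
        · rw [ih b (by omega) (fun m hm => hx m (by omega)), zero_mul]
        · rw [if_neg (by omega), if_neg (by omega), mul_zero]
      · simp
  intro i
  by_cases hx : ∀ m : Fin (n + 1), (m : ℕ) < (i : ℕ) + 1 → x m ≠ 0
  · exact hA i i rfl hx
  · push Not at hx
    obtain ⟨m, hm, hxm⟩ := hx
    have h := congrFun hg ⟨i + 1, by omega⟩
    simp only [Finset.sum_apply, Pi.smul_apply, smul_eq_mul, Pi.zero_apply] at h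
    rw [Finset.sum_eq_single i] at h
    · rw [if_neg (by omega), if_pos rfl] at h
      refine (mul_eq_zero.mp h).resolve_right (Finset.prod_ne_zero_iff.mpr ?_)
      intro l hl hyl
      have hl' := (Finset.mem_filter.mp hl).2
      exact hstable ⟨m, l, Fin.lt_def.mpr (by omega), hxm, hyl⟩
    · intro b _ hb
      have hb' : (b : ℕ) ≠ i := fun e => hb (Fin.ext e)
      by_cases hbi : (i : ℕ) + 1 = b
      · rw [if_pos hbi, Finset.prod_eq_zero (i := m) _ hxm, mul_zero]
        exact Finset.mem_filter.mpr ⟨Finset.mem_univ _, by omega⟩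
      · rw [if_neg hbi, if_neg (by omega), mul_zero]
    · simp
end
end

section
/- Fix indices $0 \le j < i \le n$ and let $\chi = \chi_j - \chi_i \in \mathbb{Z}^n$, where $\chi_l$ denotes the $l$-th standard basis vector for $1 \le l \le n$ and $\chi_0 := 0$. Then the weight space $A_\chi$ is free as a module over the polynomial ring $k[T_0,\dots,T_n]$ (acting on $A$ via the $k$-algebra map $T_l \mapsto x_ly_l$) with basis $\{(x_i x_{i+1}\cdots x_n\, x_0 x_1\cdots x_{j-1})\,u^r : r \ge 0\} \cup \{(y_j y_{j+1}\cdots y_{i-1})\,v^s : s \ge 0\}$ (where $x_0\cdots x_{j-1} = 1$ if $j = 0$). -/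
open MvPolynomial

noncomputable section

/-- The vector `χ_l ∈ ℤⁿ` for `l ∈ {0,…,n}`: the `l`-th standard basis vector if
`1 ≤ l`, and `0` if `l = 0`.  (`m : Fin n` encodes the coordinate `m+1`.) -/
def stdChi (n : ℕ) (l : Fin (n + 1)) : Fin n → ℤ :=
  fun m => if (m : ℕ) + 1 = (l : ℕ) then 1 else 0

/-- `A` is an algebra (hence a module) over `R' = k[T₀,…,Tₙ]` via `Tᵢ ↦ xᵢyᵢ`. -/
instance polyAlg (k : Type) [Field k] (n : ℕ) :
    Algebra (MvPolynomial (Fin (n + 1)) k) (MvPolynomial (Vars n) k) :=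
  ((aeval fun i : Fin (n + 1) =>
      (X (Sum.inl i) * X (Sum.inr i) : MvPolynomial (Vars n) k)) :
    MvPolynomial (Fin (n + 1)) k →ₐ[k] MvPolynomial (Vars n) k).toRingHom.toAlgebra

/-- The claimed basis of `A_{χ_j - χ_i)`, indexed by `ℕ ⊕ ℕ`:
`Sum.inl r ↦ (xᵢx_{i+1}⋯xₙ x₀⋯x_{j-1})·uʳ` and `Sum.inr s ↦ (y_j⋯y_{i-1})·vˢ`. -/
def b6 (k : Type) [Field k] (n : ℕ) (j i : Fin (n + 1)) : ℕ ⊕ ℕ → MvPolynomial (Vars n) k :=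
  Sum.elim
    (fun r =>
      (∏ l ∈ Finset.univ.filter
          (fun l : Fin (n + 1) => (i : ℕ) ≤ (l : ℕ) ∨ (l : ℕ) < (j : ℕ)), X (Sum.inl l)) *
        (∏ l, X (Sum.inl l)) ^ r)
    (fun s =>
      (∏ l ∈ Finset.univ.filter
          (fun l : Fin (n + 1) => (j : ℕ) ≤ (l : ℕ) ∧ (l : ℕ) < (i : ℕ)), X (Sum.inr l)) *
        (∏ l, X (Sum.inr l)) ^ s)

/-- Indicator of the `x`-part. -/
def fx (n : ℕ) (j i l : Fin (n + 1)) : ℕ :=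
  if (i : ℕ) ≤ (l : ℕ) ∨ (l : ℕ) < (j : ℕ) then 1 else 0

/-- Indicator of the `y`-part. -/
def fy (n : ℕ) (j i l : Fin (n + 1)) : ℕ :=
  if (j : ℕ) ≤ (l : ℕ) ∧ (l : ℕ) < (i : ℕ) then 1 else 0

lemma fx_add_fy (n : ℕ) (j i l : Fin (n + 1)) (hij : j < i) : fx n j i l + fy n j i l = 1 := by
  have : (j : ℕ) < i := hij
  unfold fx fy
  split_ifs <;> omega

/-- Exponent of the image of `T^a`. -/
def dexp (n : ℕ) (a : Fin (n + 1) →₀ ℕ) : Vars n →₀ ℕ :=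
  Finsupp.equivFunOnFinite.symm (Sum.elim a a)

/-- Exponent of the basis elements. -/
def bexp (n : ℕ) (j i : Fin (n + 1)) : ℕ ⊕ ℕ → (Vars n →₀ ℕ) :=
  Sum.elim
    (fun r => Finsupp.equivFunOnFinite.symm (Sum.elim (fun l => fx n j i l + r) (fun _ => 0)))
    (fun s => Finsupp.equivFunOnFinite.symm (Sum.elim (fun _ => 0) (fun l => fy n j i l + s)))

lemma b6_eq (k : Type) [Field k] (n : ℕ) (j i : Fin (n + 1)) (q : ℕ ⊕ ℕ) :
    b6 k n j i q = monomial (bexp n j i q) 1 := by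
  rw [monomial_eq, Finsupp.prod_fintype _ _ (by simp), Fintype.prod_sum_type]
  rcases q with r | s
  · simp [b6, bexp, fx, pow_add, Finset.prod_filter, pow_ite]
    rw [← Finset.prod_pow, ← Finset.prod_mul_distrib]
    refine Finset.prod_congr rfl fun l _ => ?_
    split_ifs <;> simp
  · simp [b6, bexp, fy, pow_add, Finset.prod_filter, pow_ite]
    rw [← Finset.prod_pow, ← Finset.prod_mul_distrib]
    refine Finset.prod_congr rfl fun l _ => ?_
    split_ifs <;> simp

lemma smul_def6 (k : Type) [Field k] (n : ℕ) (p : MvPolynomial (Fin (n + 1)) k)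
    (x : MvPolynomial (Vars n) k) :
    p • x = (aeval fun i : Fin (n + 1) =>
      (X (Sum.inl i) * X (Sum.inr i) : MvPolynomial (Vars n) k)) p * x := rfl

lemma monomial_smul (k : Type) [Field k] (n : ℕ) (j i : Fin (n + 1)) (q : ℕ ⊕ ℕ)
    (a : Fin (n + 1) →₀ ℕ) (c : k) :
    (monomial a c : MvPolynomial (Fin (n + 1)) k) • b6 k n j i q =
      monomial (dexp n a + bexp n j i q) c := by
  rw [b6_eq, smul_def6, aeval_monomial]
  have : (algebraMap k (MvPolynomial (Vars n) k)) c * (a.prod fun i e =>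
      (X (Sum.inl i) * X (Sum.inr i) : MvPolynomial (Vars n) k) ^ e) = monomial (dexp n a) c := by
    rw [monomial_eq, Finsupp.prod_fintype _ _ (by simp), Finsupp.prod_fintype _ _ (by simp),
      Fintype.prod_sum_type]
    simp [dexp, mul_pow, Finset.prod_mul_distrib, algebraMap_eq]
  rw [this, monomial_mul, mul_one]

lemma exp_inj (n : ℕ) (j i : Fin (n + 1)) (hij : j < i) (a a' : Fin (n + 1) →₀ ℕ) (q q' : ℕ ⊕ ℕ)
    (h : dexp n a + bexp n j i q = dexp n a' + bexp n j i q') : a = a' ∧ q = q' := by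
  have h1 : ∀ l, _ := fun l => DFunLike.congr_fun h (Sum.inl l)
  have h2 : ∀ l, _ := fun l => DFunLike.congr_fun h (Sum.inr l)
  have h3 := fun l => fx_add_fy n j i l hij
  rcases q with r | s <;> rcases q' with r' | s' <;>
    simp only [dexp, bexp, Finsupp.add_apply, Finsupp.equivFunOnFinite_symm_apply_apply,
      Sum.elim_inl, Sum.elim_inr] at h1 h2
  · refine ⟨Finsupp.ext fun l => by have := h2 l; omega, ?_⟩
    have := h1 0; have := h2 0; congr 1; omega
  · have := h1 0; have := h2 0; have := h3 0; omega
  · have := h1 0; have := h2 0; have := h3 0; omega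
  · refine ⟨Finsupp.ext fun l => by have := h1 l; omega, ?_⟩
    have := h1 0; have := h2 0; congr 1; omega

lemma wt_exp (n : ℕ) (j i : Fin (n + 1)) (hij : j < i) (a : Fin (n + 1) →₀ ℕ) (q : ℕ ⊕ ℕ)
    (l : Fin n) : wt n (dexp n a + bexp n j i q) l = (stdChi n j - stdChi n i) l := by
  have : (j : ℕ) < i := hij
  rcases q with r | s <;>
    simp only [wt, stdChi, dexp, bexp, Finsupp.add_apply,
      Finsupp.equivFunOnFinite_symm_apply_apply,
      Sum.elim_inl, Sum.elim_inr, fx, fy, Pi.sub_apply, Fin.val_castSucc, Fin.val_succ] <;>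
    push_cast <;> split_ifs <;> omega

lemma exp_surj (n : ℕ) (j i : Fin (n + 1)) (hij : j < i) (σ : Vars n →₀ ℕ)
    (h : ∀ l, wt n σ l = (stdChi n j - stdChi n i) l) :
    ∃ a q, σ = dexp n a + bexp n j i q := by
  have hij' : (j : ℕ) < i := hij
  have h3 := fun l => fx_add_fy n j i l hij
  obtain ⟨m, hm⟩ : ∃ m : ℤ, ∀ l, (σ (Sum.inl l) : ℤ) - σ (Sum.inr l) - fx n j i l = m := by
    refine ⟨(σ (Sum.inl 0) : ℤ) - σ (Sum.inr 0) - fx n j i 0, fun l => ?_⟩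
    induction l using Fin.induction with
    | zero => rfl
    | succ l ih =>
      rw [← ih]
      have h4 := h l
      simp only [wt, stdChi, Pi.sub_apply] at h4
      have h5 : (fx n j i l.castSucc : ℤ) - fx n j i l.succ =
        (if (l : ℕ) + 1 = (j : ℕ) then 1 else 0) - (if (l : ℕ) + 1 = (i : ℕ) then 1 else 0) := by
        simp only [fx, Fin.val_castSucc, Fin.val_succ]
        push_cast
        split_ifs <;> omega
      linarith
  rcases le_or_gt 0 m with h0 | h0
  · refine ⟨Finsupp.equivFunOnFinite.symm fun l => σ (Sum.inr l), Sum.inl m.toNat, ?_⟩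
    ext (l | l) <;> have := hm l <;> simp [dexp, bexp] 
    omega
  · refine ⟨Finsupp.equivFunOnFinite.symm fun l => σ (Sum.inl l), Sum.inr (-m - 1).toNat, ?_⟩
    ext (l | l) <;> have := hm l <;> have := h3 l <;> simp [dexp, bexp] 
    omega

lemma coeff_smul6 (k : Type) [Field k] (n : ℕ) (j i : Fin (n + 1)) (hij : j < i) (q q' : ℕ ⊕ ℕ)
    (a : Fin (n + 1) →₀ ℕ) (p : MvPolynomial (Fin (n + 1)) k) :
    coeff (dexp n a + bexp n j i q') (p • b6 k n j i q) = if q = q' then coeff a p else 0 := by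
  classical
  induction p using MvPolynomial.induction_on' with
  | monomial a' c =>
    rw [monomial_smul, coeff_monomial, coeff_monomial]
    by_cases hh : dexp n a' + bexp n j i q = dexp n a + bexp n j i q'
    · obtain ⟨rfl, rfl⟩ := exp_inj n j i hij _ _ _ _ hh
      simp
    · rw [if_neg hh]
      split_ifs with h1 h2
      · subst h1; subst h2; exact absurd rfl hh
      · rfl
      · rfl
  | add p p' hp hp' =>
    rw [add_smul, coeff_add, hp, hp']
    split_ifs <;> simp

lemma wtSpace_add (k : Type) [Field k] (n : ℕ) (χ : Fin n → ℤ) (p p' : MvPolynomial (Vars n) k)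
    (hp : p ∈ wtSpace k n χ) (hp' : p' ∈ wtSpace k n χ) : p + p' ∈ wtSpace k n χ := by
  classical
  intro σ hσ
  rcases Finset.mem_union.1 (support_add hσ) with h | h
  · exact hp σ h
  · exact hp' σ h

lemma smul_mem6 (k : Type) [Field k] (n : ℕ) (j i : Fin (n + 1)) (hij : j < i) (q : ℕ ⊕ ℕ)
    (p : MvPolynomial (Fin (n + 1)) k) :
    p • b6 k n j i q ∈ wtSpace k n (stdChi n j - stdChi n i) := by
  induction p using MvPolynomial.induction_on' with
  | monomial a' c =>
    rw [monomial_smul]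
    intro σ hσ
    have := Finset.mem_singleton.1 (support_monomial_subset hσ)
    subst this
    exact wt_exp n j i hij _ _
  | add p p' hp hp' =>
    rw [add_smul]
    exact wtSpace_add _ _ _ _ _ hp hp'

/-- For `0 ≤ j < i ≤ n`, the weight space `A_{χ_j - χ_i}` is free as a module over
`k[T₀,…,Tₙ]` (acting via `T_l ↦ x_l y_l`) with basis
`{(xᵢ⋯xₙ x₀⋯x_{j-1})uʳ : r ≥ 0} ∪ {(y_j⋯y_{i-1})vˢ : s ≥ 0}`: the family is linearly
independent and its span is exactly `A_{χ_j - χ_i}`. -/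
theorem stmt6 (k : Type) [Field k] (n : ℕ) (hn : 1 ≤ n) (j i : Fin (n + 1)) (hij : j < i) :
    LinearIndependent (MvPolynomial (Fin (n + 1)) k) (b6 k n j i) ∧
    (↑(Submodule.span (MvPolynomial (Fin (n + 1)) k) (Set.range (b6 k n j i))) :
        Set (MvPolynomial (Vars n) k)) = wtSpace k n (stdChi n j - stdChi n i) := by
  constructor
  · rw [linearIndependent_iff]
    intro c hc
    ext q a
    have h := congrArg (coeff (dexp n a + bexp n j i q)) hc
    rw [Finsupp.linearCombination_apply, Finsupp.sum, coeff_sum] at h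
    simp only [coeff_smul6 k n j i hij] at h
    rw [Finset.sum_ite_eq'] at h
    by_cases hq : q ∈ c.support
    · simpa [hq] using h
    · rw [Finsupp.notMem_support_iff.1 hq]; rfl
  · ext p
    constructor
    · intro hp
      obtain ⟨c, rfl⟩ := (Finsupp.mem_span_range_iff_exists_finsupp).1 hp
      rw [Finsupp.sum]
      refine Finset.sum_induction _ (· ∈ wtSpace k n (stdChi n j - stdChi n i))
        (wtSpace_add _ _ _) ?_ fun q _ => smul_mem6 k n j i hij q _
      intro σ hσ
      simp at hσ
    · intro hp
      rw [SetLike.mem_coe, p.as_sum]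
      refine Submodule.sum_mem _ fun σ hσ => ?_
      obtain ⟨a, q, h⟩ := exp_surj n j i hij σ (hp σ hσ)
      have h2 := monomial_smul k n j i q a (coeff σ p)
      rw [← h] at h2
      rw [← h2]
      exact Submodule.smul_mem _ _ (Submodule.subset_span ⟨q, rfl⟩)
end
end

section
/- The complex $C$ satisfies $d \circ d = 0$, and its cohomology is: $H^0(C) \cong k$; $H^{-m}(C) = 0$ for all odd $m \ge 1$; and $H^{-m}(C) \cong k$ for all even $m \ge 2$, with $H^{-m}(C)$ spanned by the class of $w_m^{\alpha} + w_m^{\beta}$. (This is the computation $H^*(\Gamma) = k[\eta]$, $\deg \eta = -2$, $\eta = \alpha\beta + \beta\alpha$, for the derived contraction algebra of the conifold.) -/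
open MvPolynomial

noncomputable section

/-- `S = k[x,y]`, with `x = X 0` and `y = X 1`. -/
abbrev Sk (k : Type) [Field k] : Type := MvPolynomial (Fin 2) k

/-- The differential `d : C^{-1} → C^0`, `(p, q) ↦ p·x + q·y`
(corresponding to `dα = x`, `dβ = y`). -/
def d1 (k : Type) [Field k] : Sk k × Sk k →ₗ[Sk k] Sk k :=
  (X 0 : Sk k) • LinearMap.fst (Sk k) (Sk k) (Sk k) +
    (X 1 : Sk k) • LinearMap.snd (Sk k) (Sk k) (Sk k)

/-- The differential `C^{-m} → C^{-m+1}` for even `m ≥ 2`, in the bases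
`(w_m^α, w_m^β)`, `(w_{m-1}^α, w_{m-1}^β)`:
`d(w^α) = x·w^β - y·w^α` and `d(w^β) = y·w^α - x·w^β`. -/
def dEven (k : Type) [Field k] : Sk k × Sk k →ₗ[Sk k] Sk k × Sk k :=
  LinearMap.prod
    ((-(X 1 : Sk k)) • LinearMap.fst (Sk k) (Sk k) (Sk k) +
      (X 1 : Sk k) • LinearMap.snd (Sk k) (Sk k) (Sk k))
    ((X 0 : Sk k) • LinearMap.fst (Sk k) (Sk k) (Sk k) +
      (-(X 0 : Sk k)) • LinearMap.snd (Sk k) (Sk k) (Sk k))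

/-- The differential `C^{-m} → C^{-m+1}` for odd `m ≥ 3`:
`d(w^α) = x·(w^α + w^β)` and `d(w^β) = y·(w^α + w^β)`. -/
def dOdd (k : Type) [Field k] : Sk k × Sk k →ₗ[Sk k] Sk k × Sk k :=
  LinearMap.prod
    ((X 0 : Sk k) • LinearMap.fst (Sk k) (Sk k) (Sk k) +
      (X 1 : Sk k) • LinearMap.snd (Sk k) (Sk k) (Sk k))
    ((X 0 : Sk k) • LinearMap.fst (Sk k) (Sk k) (Sk k) +
      (X 1 : Sk k) • LinearMap.snd (Sk k) (Sk k) (Sk k))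

/-- The differential `D m : C^{-m} → C^{-m+1}` for `m ≥ 2`. -/
def D (k : Type) [Field k] (m : ℕ) : Sk k × Sk k →ₗ[Sk k] Sk k × Sk k :=
  if Even m then dEven k else dOdd k

theorem aux_d1 (k : Type) [Field k] (p q : Sk k) : d1 k (p, q) = X 0 * p + X 1 * q := by
  simp [d1]

theorem aux_dEven (k : Type) [Field k] (p q : Sk k) :
    dEven k (p, q) = (X 1 * (q - p), X 0 * (p - q)) := by
  simp only [dEven, LinearMap.prod_apply, Function.prod, LinearMap.add_apply,
    LinearMap.smul_apply, LinearMap.fst_apply, LinearMap.snd_apply, smul_eq_mul, Prod.mk.injEq]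
  constructor <;> ring

theorem aux_dOdd (k : Type) [Field k] (p q : Sk k) :
    dOdd k (p, q) = (X 0 * p + X 1 * q, X 0 * p + X 1 * q) := by
  simp [dOdd]

theorem aux_syz (k : Type) [Field k] (p q : Sk k) (h : X 0 * p + X 1 * q = 0) :
    ∃ r : Sk k, p = X 1 * r ∧ q = - (X 0 * r) := by
  have hp : Prime (X 1 : Sk k) := MvPolynomial.X_prime
  have hd : (X 1 : Sk k) ∣ X 0 * p := ⟨-q, by linear_combination h⟩
  rcases hp.dvd_or_dvd hd with h0 | ⟨r, hr⟩
  · rw [MvPolynomial.X_dvd_X] at h0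
    rcases h0 with h0 | h0 <;> simp at h0
  · refine ⟨r, hr, ?_⟩
    apply mul_left_cancel₀ hp.ne_zero
    rw [hr] at h
    linear_combination h

theorem aux_dec (k : Type) [Field k] (z : Sk k) :
    ∃ (c : k) (p q : Sk k), X 0 * p + X 1 * q = z - algebraMap k (Sk k) c := by
  induction z using MvPolynomial.induction_on with
  | C a => exact ⟨a, 0, 0, by simp [MvPolynomial.algebraMap_eq]⟩
  | add f g hf hg =>
    obtain ⟨c, p, q, h⟩ := hf
    obtain ⟨c', p', q', h'⟩ := hg
    exact ⟨c + c', p + p', q + q', by rw [map_add]; linear_combination h + h'⟩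
  | mul_X f i _ =>
    fin_cases i
    · exact ⟨0, f, 0, by simp [mul_comm]⟩
    · exact ⟨0, 0, f, by simp [mul_comm]⟩

theorem aux_const (k : Type) [Field k] (c : k) (p q : Sk k)
    (h : X 0 * p + X 1 * q = algebraMap k (Sk k) c) : c = 0 := by
  have := congrArg MvPolynomial.constantCoeff h
  simpa [MvPolynomial.algebraMap_eq] using this.symm

theorem aux_ker_odd (k : Type) [Field k] (p q : Sk k) :
    X 0 * p + X 1 * q = 0 ↔ (p, q) ∈ LinearMap.range (dEven k) := by
  constructor
  · intro h
    obtain ⟨r, hp, hq⟩ := aux_syz k p q h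
    refine ⟨(0, r), ?_⟩
    rw [aux_dEven, hp, hq]
    simp
  · rintro ⟨⟨a, b⟩, h⟩
    rw [aux_dEven, Prod.mk.injEq] at h
    rw [← h.1, ← h.2]
    ring

/-- The complex `C` (the derived contraction algebra of the conifold) satisfies
`d ∘ d = 0`, and its cohomology is: `H⁰(C) ≅ k` (spanned by the class of `1`);
`H^{-m}(C) = 0` for odd `m ≥ 1`; and `H^{-m}(C) ≅ k` for even `m ≥ 2`, spanned by the
class of `w_m^α + w_m^β` (i.e. `(1,1)`).  This is `H^*(Γ) = k[η]`, `deg η = -2`,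
`η = αβ + βα`. -/
theorem stmt11 (k : Type) [Field k] :
    -- d ∘ d = 0
    (d1 k ∘ₗ D k 2 = 0) ∧
    (∀ m : ℕ, 2 ≤ m → D k m ∘ₗ D k (m + 1) = 0) ∧
    -- H⁰(C) ≅ k, spanned by the class of 1
    (∀ z : Sk k, ∃ c : k, z - algebraMap k (Sk k) c ∈ LinearMap.range (d1 k)) ∧
    (∀ c : k, algebraMap k (Sk k) c ∈ LinearMap.range (d1 k) → c = 0) ∧
    -- H^{-m}(C) = 0 for odd m ≥ 1
    (LinearMap.ker (d1 k) = LinearMap.range (D k 2)) ∧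
    (∀ m : ℕ, 3 ≤ m → Odd m → LinearMap.ker (D k m) = LinearMap.range (D k (m + 1))) ∧
    -- H^{-m}(C) ≅ k for even m ≥ 2, spanned by the class of w_m^α + w_m^β = (1,1)
    (∀ m : ℕ, 2 ≤ m → Even m →
      D k m (1, 1) = 0 ∧
      (∀ z ∈ LinearMap.ker (D k m),
        ∃ c : k, z - algebraMap k (Sk k) c • ((1 : Sk k), (1 : Sk k)) ∈
          LinearMap.range (D k (m + 1))) ∧
      (∀ c : k, algebraMap k (Sk k) c • ((1 : Sk k), (1 : Sk k)) ∈
        LinearMap.range (D k (m + 1)) → c = 0)) := by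
  have hE : ∀ m, Even m → D k m = dEven k := fun m h => by simp [D, h]
  have hO : ∀ m, ¬ Even m → D k m = dOdd k := fun m h => by simp [D, h]
  have hx : (X 0 : Sk k) ≠ 0 := MvPolynomial.X_ne_zero 0
  refine ⟨?_, ?_, ?_, ?_, ?_, ?_, ?_⟩
  · rw [hE 2 even_two]
    apply LinearMap.ext
    rintro ⟨p, q⟩
    rw [LinearMap.comp_apply, aux_dEven, aux_d1, LinearMap.zero_apply]
    ring
  · intro m _
    apply LinearMap.ext
    rintro ⟨p, q⟩
    rw [LinearMap.comp_apply, LinearMap.zero_apply]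
    by_cases h : Even m
    · rw [hE m h, hO (m + 1) (by simpa [Nat.even_add_one] using h), aux_dOdd, aux_dEven]
      simp
    · rw [hO m h, hE (m + 1) (by simpa [Nat.even_add_one] using h), aux_dEven, aux_dOdd,
        Prod.mk_eq_zero]
      constructor <;> ring
  · intro z
    obtain ⟨c, p, q, h⟩ := aux_dec k z
    exact ⟨c, (p, q), by rw [aux_d1, h]⟩
  · rintro c ⟨⟨p, q⟩, h⟩
    rw [aux_d1] at h
    exact aux_const k c p q h
  · rw [hE 2 even_two]
    ext ⟨p, q⟩ : 1
    rw [LinearMap.mem_ker, aux_d1, aux_ker_odd]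
  · intro m _ hm
    have h : ¬ Even m := Nat.not_even_iff_odd.mpr hm
    rw [hO m h, hE (m + 1) (by simpa [Nat.even_add_one] using h)]
    ext ⟨p, q⟩ : 1
    rw [LinearMap.mem_ker, aux_dOdd, Prod.mk_eq_zero, and_self, aux_ker_odd]
  · intro m _ h
    rw [hE m h, hO (m + 1) (by simpa [Nat.even_add_one] using h)]
    refine ⟨by rw [aux_dEven]; simp, ?_, ?_⟩
    · rintro ⟨p, q⟩ hz
      rw [LinearMap.mem_ker, aux_dEven, Prod.mk_eq_zero] at hz
      have hpq : p = q := by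
        rcases mul_eq_zero.mp hz.2 with h0 | h0
        · exact absurd h0 hx
        · exact sub_eq_zero.mp h0
      subst hpq
      obtain ⟨c, a, b, hc⟩ := aux_dec k p
      refine ⟨c, (a, b), ?_⟩
      rw [aux_dOdd, hc, Prod.smul_mk, Prod.mk_sub_mk, smul_eq_mul, mul_one]
    · rintro c ⟨⟨a, b⟩, hc⟩
      rw [aux_dOdd, Prod.smul_mk, smul_eq_mul, mul_one, Prod.mk.injEq] at hc
      exact aux_const k c a b hc.1
end
end

section
/- There is a $k$-algebra isomorphism $Q \to P$ determined by $E_1 \mapsto E_1$, $E_2 \mapsto E_2$, $a \mapsto B$, $c \mapsto A$, $\ell \mapsto XE_2$, $m \mapsto YE_1$. (This identifies the contraction algebra $H^0(\Gamma)$ of the flop of $uv = xy(x^2+y^3)$, as computed from the relative Fukaya category model, with August's presentation of the contraction algebra $B_{con}$.) -/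
noncomputable section

/-- Generators of `P`: `0` is `X`, `1` is `Y`, `2` is `E₁`, `3` is `E₂`, `4` is `A`,
`5` is `B`. -/
inductive PRel (k : Type) [Field k] :
    FreeAlgebra k (Fin 6) → FreeAlgebra k (Fin 6) → Prop
  | centX : ∀ g : Fin 6,
      PRel k (FreeAlgebra.ι k 0 * FreeAlgebra.ι k g) (FreeAlgebra.ι k g * FreeAlgebra.ι k 0)
  | centY : ∀ g : Fin 6,
      PRel k (FreeAlgebra.ι k 1 * FreeAlgebra.ι k g) (FreeAlgebra.ι k g * FreeAlgebra.ι k 1)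
  | total : PRel k (FreeAlgebra.ι k 2 + FreeAlgebra.ι k 3) 1
  | orth12 : PRel k (FreeAlgebra.ι k 2 * FreeAlgebra.ι k 3) 0
  | orth21 : PRel k (FreeAlgebra.ι k 3 * FreeAlgebra.ι k 2) 0
  | idem1 : PRel k (FreeAlgebra.ι k 2 * FreeAlgebra.ι k 2) (FreeAlgebra.ι k 2)
  | idem2 : PRel k (FreeAlgebra.ι k 3 * FreeAlgebra.ι k 3) (FreeAlgebra.ι k 3)
  | sandA : PRel k (FreeAlgebra.ι k 2 * FreeAlgebra.ι k 4 * FreeAlgebra.ι k 3)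
      (FreeAlgebra.ι k 4)
  | sandB : PRel k (FreeAlgebra.ι k 3 * FreeAlgebra.ι k 5 * FreeAlgebra.ι k 2)
      (FreeAlgebra.ι k 5)
  | relAB : PRel k (FreeAlgebra.ι k 4 * FreeAlgebra.ι k 5)
      ((FreeAlgebra.ι k 0 ^ 2 + FreeAlgebra.ι k 1 ^ 3) * FreeAlgebra.ι k 2)
  | relBA : PRel k (FreeAlgebra.ι k 5 * FreeAlgebra.ι k 4)
      ((FreeAlgebra.ι k 0 ^ 2 + FreeAlgebra.ι k 1 ^ 3) * FreeAlgebra.ι k 3)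
  | relXE1 : PRel k (FreeAlgebra.ι k 0 * FreeAlgebra.ι k 2) 0
  | relYE2 : PRel k (FreeAlgebra.ι k 1 * FreeAlgebra.ι k 3) 0

/-- `P`: the contraction algebra of `uv = xy(x²+y³)` computed from the relative Fukaya
category model. -/
abbrev Palg (k : Type) [Field k] : Type := RingQuot (PRel k)

/-- Generators of `Q`: `0` is `E₁`, `1` is `E₂`, `2` is `a`, `3` is `c`, `4` is `ℓ`,
`5` is `m`. -/
inductive QRel (k : Type) [Field k] :
    FreeAlgebra k (Fin 6) → FreeAlgebra k (Fin 6) → Prop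
  | total : QRel k (FreeAlgebra.ι k 0 + FreeAlgebra.ι k 1) 1
  | orth12 : QRel k (FreeAlgebra.ι k 0 * FreeAlgebra.ι k 1) 0
  | orth21 : QRel k (FreeAlgebra.ι k 1 * FreeAlgebra.ι k 0) 0
  | idem1 : QRel k (FreeAlgebra.ι k 0 * FreeAlgebra.ι k 0) (FreeAlgebra.ι k 0)
  | idem2 : QRel k (FreeAlgebra.ι k 1 * FreeAlgebra.ι k 1) (FreeAlgebra.ι k 1)
  | sandM : QRel k (FreeAlgebra.ι k 0 * FreeAlgebra.ι k 5 * FreeAlgebra.ι k 0)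
      (FreeAlgebra.ι k 5)
  | sandL : QRel k (FreeAlgebra.ι k 1 * FreeAlgebra.ι k 4 * FreeAlgebra.ι k 1)
      (FreeAlgebra.ι k 4)
  | sandA : QRel k (FreeAlgebra.ι k 1 * FreeAlgebra.ι k 2 * FreeAlgebra.ι k 0)
      (FreeAlgebra.ι k 2)
  | sandC : QRel k (FreeAlgebra.ι k 0 * FreeAlgebra.ι k 3 * FreeAlgebra.ι k 1)
      (FreeAlgebra.ι k 3)
  | relL2 : QRel k (FreeAlgebra.ι k 4 * FreeAlgebra.ι k 4)
      (FreeAlgebra.ι k 2 * FreeAlgebra.ι k 3)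
  | relM3 : QRel k (FreeAlgebra.ι k 5 * FreeAlgebra.ι k 5 * FreeAlgebra.ι k 5)
      (FreeAlgebra.ι k 3 * FreeAlgebra.ι k 2)
  | relLA : QRel k (FreeAlgebra.ι k 4 * FreeAlgebra.ι k 2) 0
  | relAM : QRel k (FreeAlgebra.ι k 2 * FreeAlgebra.ι k 5) 0
  | relCL : QRel k (FreeAlgebra.ι k 3 * FreeAlgebra.ι k 4) 0
  | relMC : QRel k (FreeAlgebra.ι k 5 * FreeAlgebra.ι k 3) 0

/-- `Q`: August's presentation of the contraction algebra `B_con`. -/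
abbrev Qalg (k : Type) [Field k] : Type := RingQuot (QRel k)

def mkP (k : Type) [Field k] (g : Fin 6) : Palg k :=
  RingQuot.mkAlgHom k (PRel k) (FreeAlgebra.ι k g)

def mkQ (k : Type) [Field k] (g : Fin 6) : Qalg k :=
  RingQuot.mkAlgHom k (QRel k) (FreeAlgebra.ι k g)

/-- The common normal-form relations satisfied by the generators of both algebras. -/
structure NF {R : Type} [Ring R] (x y e f a b : R) : Prop where
  tot : e + f = 1
  ef : e * f = 0
  fe : f * e = 0
  ee : e * e = e
  ff : f * f = f
  xe : x * e = 0
  ex : e * x = 0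
  xf : x * f = x
  fx : f * x = x
  ye : y * e = y
  ey : e * y = y
  yf : y * f = 0
  fy : f * y = 0
  xy : x * y = 0
  yx : y * x = 0
  ea : e * a = a
  fa : f * a = 0
  ae : a * e = 0
  af : a * f = a
  eb : e * b = 0
  fb : f * b = b
  be : b * e = b
  bf : b * f = 0
  xa : x * a = 0
  ax : a * x = 0
  ya : y * a = 0
  ay : a * y = 0
  xb : x * b = 0
  bx : b * x = 0
  yb : y * b = 0
  hby : b * y = 0
  ab : a * b = y * y * y
  ba : b * a = x * x

theorem nfP (k : Type) [Field k] :
    NF (mkP k 0) (mkP k 1) (mkP k 2) (mkP k 3) (mkP k 4) (mkP k 5) := by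
  have R : ∀ {u v}, PRel k u v → RingQuot.mkAlgHom k (PRel k) u = RingQuot.mkAlgHom k (PRel k) v :=
    fun h => RingQuot.mkAlgHom_rel k h
  have cX : ∀ g, mkP k 0 * mkP k g = mkP k g * mkP k 0 := fun g => by
    simpa [mkP] using R (PRel.centX g)
  have cY : ∀ g, mkP k 1 * mkP k g = mkP k g * mkP k 1 := fun g => by
    simpa [mkP] using R (PRel.centY g)
  have tot : mkP k 2 + mkP k 3 = 1 := by simpa [mkP] using R PRel.total
  have ef : mkP k 2 * mkP k 3 = 0 := by simpa [mkP] using R PRel.orth12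
  have fe : mkP k 3 * mkP k 2 = 0 := by simpa [mkP] using R PRel.orth21
  have ee : mkP k 2 * mkP k 2 = mkP k 2 := by simpa [mkP] using R PRel.idem1
  have ff : mkP k 3 * mkP k 3 = mkP k 3 := by simpa [mkP] using R PRel.idem2
  have sa : mkP k 2 * mkP k 4 * mkP k 3 = mkP k 4 := by simpa [mkP] using R PRel.sandA
  have sb : mkP k 3 * mkP k 5 * mkP k 2 = mkP k 5 := by simpa [mkP] using R PRel.sandB
  have ab : mkP k 4 * mkP k 5 = (mkP k 0 ^ 2 + mkP k 1 ^ 3) * mkP k 2 := by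
    simpa [mkP] using R PRel.relAB
  have ba : mkP k 5 * mkP k 4 = (mkP k 0 ^ 2 + mkP k 1 ^ 3) * mkP k 3 := by
    simpa [mkP] using R PRel.relBA
  have xe : mkP k 0 * mkP k 2 = 0 := by simpa [mkP] using R PRel.relXE1
  have yf : mkP k 1 * mkP k 3 = 0 := by simpa [mkP] using R PRel.relYE2
  have cXe := cX 2
  have cXf := cX 3
  have cXa := cX 4
  have cXb := cX 5
  have cXy := cX 1
  have cYe := cY 2
  have cYf := cY 3
  have cYa := cY 4
  have cYb := cY 5
  generalize mkP k 0 = x at *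
  generalize mkP k 1 = y at *
  generalize mkP k 2 = e at *
  generalize mkP k 3 = f at *
  generalize mkP k 4 = a at *
  generalize mkP k 5 = b at *
  have ex : e * x = 0 := cXe.symm.trans xe
  have fy : f * y = 0 := cYf.symm.trans yf
  have xf : x * f = x := by
    have := congrArg (x * ·) tot
    simpa [mul_add, xe] using this
  have ye : y * e = y := by
    have := congrArg (y * ·) tot
    simpa [mul_add, yf] using this
  have fx : f * x = x := cXf.symm.trans xf
  have ey : e * y = y := cYe.symm.trans ye
  have ea : e * a = a := by rw [← sa]; simp only [← mul_assoc, ee]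
  have fa : f * a = 0 := by rw [← sa]; simp only [← mul_assoc, fe, zero_mul]
  have af : a * f = a := by rw [← sa]; simp only [mul_assoc, ff]
  have ae : a * e = 0 := by rw [← sa]; simp only [mul_assoc, fe, mul_zero]
  have fb : f * b = b := by rw [← sb]; simp only [← mul_assoc, ff]
  have eb : e * b = 0 := by rw [← sb]; simp only [← mul_assoc, ef, zero_mul]
  have be : b * e = b := by rw [← sb]; simp only [mul_assoc, ee]
  have bf : b * f = 0 := by rw [← sb]; simp only [mul_assoc, ef, mul_zero]
  have xa : x * a = 0 := by rw [← ea, ← mul_assoc, xe, zero_mul]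
  have bx : b * x = 0 := by rw [← be, mul_assoc, ex, mul_zero]
  have yb : y * b = 0 := by rw [← fb, ← mul_assoc, yf, zero_mul]
  have ay : a * y = 0 := by rw [← af, mul_assoc, fy, mul_zero]
  have xy : x * y = 0 := by rw [← xf, mul_assoc, fy, mul_zero]
  exact
    { tot := tot, ef := ef, fe := fe, ee := ee, ff := ff, xe := xe, ex := ex, xf := xf, fx := fx
      ye := ye, ey := ey, yf := yf, fy := fy, xy := xy, yx := cXy.symm.trans xy
      ea := ea, fa := fa, ae := ae, af := af, eb := eb, fb := fb, be := be, bf := bf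
      xa := xa, ax := cXa.symm.trans xa, ya := cYa.trans ay, ay := ay
      xb := cXb.trans bx, bx := bx, yb := yb, hby := cYb.symm.trans yb
      ab := by rw [ab]; simp only [pow_succ, pow_zero, one_mul, add_mul, mul_assoc, xe, ye, mul_zero, zero_add]
      ba := by rw [ba]; simp only [pow_succ, pow_zero, one_mul, add_mul, mul_assoc, xf, yf, mul_zero, add_zero] }

theorem nfQ (k : Type) [Field k] :
    NF (mkQ k 4) (mkQ k 5) (mkQ k 0) (mkQ k 1) (mkQ k 3) (mkQ k 2) := by
  have R : ∀ {u v}, QRel k u v → RingQuot.mkAlgHom k (QRel k) u = RingQuot.mkAlgHom k (QRel k) v :=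
    fun h => RingQuot.mkAlgHom_rel k h
  have tot : mkQ k 0 + mkQ k 1 = 1 := by simpa [mkQ] using R QRel.total
  have ef : mkQ k 0 * mkQ k 1 = 0 := by simpa [mkQ] using R QRel.orth12
  have fe : mkQ k 1 * mkQ k 0 = 0 := by simpa [mkQ] using R QRel.orth21
  have ee : mkQ k 0 * mkQ k 0 = mkQ k 0 := by simpa [mkQ] using R QRel.idem1
  have ff : mkQ k 1 * mkQ k 1 = mkQ k 1 := by simpa [mkQ] using R QRel.idem2
  have sy : mkQ k 0 * mkQ k 5 * mkQ k 0 = mkQ k 5 := by simpa [mkQ] using R QRel.sandM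
  have sx : mkQ k 1 * mkQ k 4 * mkQ k 1 = mkQ k 4 := by simpa [mkQ] using R QRel.sandL
  have sb : mkQ k 1 * mkQ k 2 * mkQ k 0 = mkQ k 2 := by simpa [mkQ] using R QRel.sandA
  have sa : mkQ k 0 * mkQ k 3 * mkQ k 1 = mkQ k 3 := by simpa [mkQ] using R QRel.sandC
  have ba : mkQ k 4 * mkQ k 4 = mkQ k 2 * mkQ k 3 := by simpa [mkQ] using R QRel.relL2
  have ab : mkQ k 5 * mkQ k 5 * mkQ k 5 = mkQ k 3 * mkQ k 2 := by
    simpa [mkQ] using R QRel.relM3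
  have xb : mkQ k 4 * mkQ k 2 = 0 := by simpa [mkQ] using R QRel.relLA
  have hby : mkQ k 2 * mkQ k 5 = 0 := by simpa [mkQ] using R QRel.relAM
  have ax : mkQ k 3 * mkQ k 4 = 0 := by simpa [mkQ] using R QRel.relCL
  have ya : mkQ k 5 * mkQ k 3 = 0 := by simpa [mkQ] using R QRel.relMC
  generalize mkQ k 4 = x at *
  generalize mkQ k 5 = y at *
  generalize mkQ k 0 = e at *
  generalize mkQ k 1 = f at *
  generalize mkQ k 3 = a at *
  generalize mkQ k 2 = b at *
  have ea : e * a = a := by rw [← sa]; simp only [← mul_assoc, ee]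
  have fa : f * a = 0 := by rw [← sa]; simp only [← mul_assoc, fe, zero_mul]
  have af : a * f = a := by rw [← sa]; simp only [mul_assoc, ff]
  have ae : a * e = 0 := by rw [← sa]; simp only [mul_assoc, fe, mul_zero]
  have fb : f * b = b := by rw [← sb]; simp only [← mul_assoc, ff]
  have eb : e * b = 0 := by rw [← sb]; simp only [← mul_assoc, ef, zero_mul]
  have be : b * e = b := by rw [← sb]; simp only [mul_assoc, ee]
  have bf : b * f = 0 := by rw [← sb]; simp only [mul_assoc, ef, mul_zero]
  have fx : f * x = x := by rw [← sx]; simp only [← mul_assoc, ff]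
  have ex : e * x = 0 := by rw [← sx]; simp only [← mul_assoc, ef, zero_mul]
  have xf : x * f = x := by rw [← sx]; simp only [mul_assoc, ff]
  have xe : x * e = 0 := by rw [← sx]; simp only [mul_assoc, fe, mul_zero]
  have ey : e * y = y := by rw [← sy]; simp only [← mul_assoc, ee]
  have fy : f * y = 0 := by rw [← sy]; simp only [← mul_assoc, fe, zero_mul]
  have ye : y * e = y := by rw [← sy]; simp only [mul_assoc, ee]
  have yf : y * f = 0 := by rw [← sy]; simp only [mul_assoc, ef, mul_zero]
  exact
    { tot := tot, ef := ef, fe := fe, ee := ee, ff := ff, xe := xe, ex := ex, xf := xf, fx := fx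
      ye := ye, ey := ey, yf := yf, fy := fy
      xy := by rw [← xf, mul_assoc, fy, mul_zero]
      yx := by rw [← ye, mul_assoc, ex, mul_zero]
      ea := ea, fa := fa, ae := ae, af := af, eb := eb, fb := fb, be := be, bf := bf
      xa := by rw [← xf, mul_assoc, fa, mul_zero]
      ax := ax, ya := ya
      ay := by rw [← af, mul_assoc, fy, mul_zero]
      xb := xb
      bx := by rw [← be, mul_assoc, ex, mul_zero]
      yb := by rw [← ye, mul_assoc, eb, mul_zero]
      hby := hby
      ab := ab.symm, ba := ba.symm }

/-- The map `Q → P`. -/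
def toP (k : Type) [Field k] : Qalg k →ₐ[k] Palg k :=
  RingQuot.liftAlgHom k ⟨FreeAlgebra.lift k
    ![mkP k 2, mkP k 3, mkP k 5, mkP k 4, mkP k 0, mkP k 1], by
      have h := nfP k
      intro u v r
      cases r <;> simp [h.tot, h.ef, h.fe, h.ee, h.ff, h.xf, h.fx, h.ye, h.ey, h.ea, h.af, h.fb,
        h.be, h.ab, h.ba, h.xb, h.hby, h.ax, h.ya]⟩

/-- The map `P → Q`. -/
def toQ (k : Type) [Field k] : Palg k →ₐ[k] Qalg k :=
  RingQuot.liftAlgHom k ⟨FreeAlgebra.lift k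
    ![mkQ k 4, mkQ k 5, mkQ k 0, mkQ k 1, mkQ k 3, mkQ k 2], by
      have h := nfQ k
      intro u v r
      cases r
      case centX g =>
        fin_cases g <;> simp [h.xy, h.yx, h.xe, h.ex, h.xf, h.fx, h.xa, h.ax, h.xb, h.bx]
      case centY g =>
        fin_cases g <;> simp [h.xy, h.yx, h.ye, h.ey, h.yf, h.fy, h.ya, h.ay, h.yb, h.hby]
      all_goals simp [h.tot, h.ef, h.fe, h.ee, h.ff, h.xe, h.yf, h.ea, h.af, h.fb, h.be, h.ab,
        h.ba, pow_succ, add_mul, mul_assoc, h.xf, h.ye]⟩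

theorem toP_mk (k : Type) [Field k] (g : Fin 6) :
    toP k (mkQ k g) = ![mkP k 2, mkP k 3, mkP k 5, mkP k 4, mkP k 0, mkP k 1] g := by
  simp [toP, mkQ]

theorem toQ_mk (k : Type) [Field k] (g : Fin 6) :
    toQ k (mkP k g) = ![mkQ k 4, mkQ k 5, mkQ k 0, mkQ k 1, mkQ k 3, mkQ k 2] g := by
  simp [toQ, mkP]

/-- There is a `k`-algebra isomorphism `Q → P` determined by `E₁ ↦ E₁`, `E₂ ↦ E₂`,
`a ↦ B`, `c ↦ A`, `ℓ ↦ X·E₂`, `m ↦ Y·E₁`. -/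
theorem stmt14 (k : Type) [Field k] :
    ∃ φ : Qalg k ≃ₐ[k] Palg k,
      φ (mkQ k 0) = mkP k 2 ∧
      φ (mkQ k 1) = mkP k 3 ∧
      φ (mkQ k 2) = mkP k 5 ∧
      φ (mkQ k 3) = mkP k 4 ∧
      φ (mkQ k 4) = mkP k 0 * mkP k 3 ∧
      φ (mkQ k 5) = mkP k 1 * mkP k 2 := by
  have h := nfP k
  refine ⟨AlgEquiv.ofAlgHom (toP k) (toQ k) ?_ ?_, ?_, ?_, ?_, ?_, ?_, ?_⟩
  · apply RingQuot.ringQuot_ext'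
    apply FreeAlgebra.hom_ext
    funext g
    change toP k (toQ k (mkP k g)) = mkP k g
    rw [toQ_mk]
    fin_cases g <;> simp [toP_mk]
  · apply RingQuot.ringQuot_ext'
    apply FreeAlgebra.hom_ext
    funext g
    change toQ k (toP k (mkQ k g)) = mkQ k g
    rw [toP_mk]
    fin_cases g <;> simp [toQ_mk]
  · simp [toP_mk]
  · simp [toP_mk]
  · simp [toP_mk]
  · simp [toP_mk]
  · simp [toP_mk, h.xf]
  · simp [toP_mk, h.ye]
end
end
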